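/- arXiv:2201.12678 — 5 statements merged into one kernel-verified Lean document; each statement's English description precedes it below -/
import Mathlib

section
/- Let E be a real inner product space, η > 0, C > 0, and T ≥ 0. For t = 0,...,T let ℓ_t : E → ℝ be convex, differentiable, C-Lipschitz and nonnegative, and suppose there exists w* ∈ E with ℓ_t(w*) = 0 for all t (perfect interpolation). Generate iterates by the ALI-G update: w_{t+1} = w_t − γ_t η ∇ℓ_t(w_t) with γ_t = min{1, ℓ_t(w_t)/(η‖∇ℓ_t(w_t)‖²)}. Then (1/(T+1)) Σ_{t=0}^T ℓ_t(w_t) ≤ C √(‖w_0 − w*‖²/(T+1)) + ‖w_0 − w*‖²/(η(T+1)). -/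
/-!
Convexity and interpolation give `ℓ_t(w_t) ≤ ⟪∇ℓ_t(w_t), w_t - w*⟫`. With the actual step size
`s_t = γ_t η`, the choice of `γ_t` ensures `s_t ‖∇ℓ_t(w_t)‖² ≤ ℓ_t(w_t)`, so expanding the square
yields `s_t ℓ_t(w_t) ≤ δ_t`, where `δ_t = ‖w_t - w*‖² - ‖w_{t+1} - w*‖²`.
If the step is clipped (`s_t = η`), then `ℓ_t(w_t) ≤ δ_t / η`; otherwise
`s_t = ℓ_t(w_t) / ‖∇ℓ_t(w_t)‖²` and `‖∇ℓ_t(w_t)‖ ≤ C` give `ℓ_t(w_t) ≤ C √δ_t`. As `δ_t ≥ 0`,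
in both cases `ℓ_t(w_t) ≤ δ_t / η + C √δ_t`. The `δ_t` telescope to at most `‖w_0 - w*‖²`, and
Cauchy-Schwarz bounds the sum of the square roots, which gives the rate.
-/

/-- First-order characterisation of convexity: the graph lies above its tangent hyperplanes. -/
lemma convex_tangent_le {E : Type*} [NormedAddCommGroup E] [InnerProductSpace ℝ E]
    {f : E → ℝ} {g x : E} (hf : HasFDerivAt f (innerSL ℝ g) x)
    (hc : ConvexOn ℝ Set.univ f) (y : E) : f x + inner ℝ g (y - x) ≤ f y := by
  have h1 : ConvexOn ℝ Set.univ (f ∘ AffineMap.lineMap (k := ℝ) x y) := by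
    simpa using hc.comp_affineMap (AffineMap.lineMap (k := ℝ) x y)
  have h2 : HasDerivAt (f ∘ AffineMap.lineMap (k := ℝ) x y) (inner ℝ g (y - x)) 0 := by
    have hf' : HasFDerivAt f (innerSL ℝ g) (AffineMap.lineMap (k := ℝ) x y (0 : ℝ)) := by
      simpa using hf
    exact hf'.comp_hasDerivAt 0 AffineMap.hasDerivAt_lineMap
  have h3 := h1.le_slope_of_hasDerivAt (Set.mem_univ 0) (Set.mem_univ 1) one_pos h2
  simp [slope_def_field] at h3
  linarith

/-- One step of ALI-G, with `L = f x` the current loss: `x` moves no further from the minimiser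
`z`, and the decrease of the squared distance controls the loss. -/
lemma alig_step {E : Type*} [NormedAddCommGroup E] [InnerProductSpace ℝ E]
    {η C L : ℝ} (hη : 0 < η) {g x x' z : E} (hL : 0 ≤ L) (hgC : ‖g‖ ≤ C)
    (hin : L ≤ inner ℝ g (x - z))
    (hx' : x' = x - (min 1 (L / (η * ‖g‖ ^ 2)) * η) • g) :
    0 ≤ ‖x - z‖ ^ 2 - ‖x' - z‖ ^ 2 ∧
      L ≤ (‖x - z‖ ^ 2 - ‖x' - z‖ ^ 2) / η + C * √(‖x - z‖ ^ 2 - ‖x' - z‖ ^ 2) := by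
  have hC0 : 0 ≤ C := (norm_nonneg g).trans hgC
  rcases eq_or_ne g 0 with rfl | hg
  · have : L = 0 := le_antisymm (by simpa using hin) hL
    simp [hx', this]
  have hG : 0 < ‖g‖ := norm_pos_iff.mpr hg
  set s := min 1 (L / (η * ‖g‖ ^ 2)) * η with hs
  have hs0 : 0 ≤ s := by positivity
  have hsG : s * ‖g‖ ^ 2 ≤ L := by
    calc s * ‖g‖ ^ 2 ≤ (L / (η * ‖g‖ ^ 2)) * η * ‖g‖ ^ 2 := by
          rw [hs]; gcongr; exact min_le_right _ _
      _ = L := by field_simp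
  have hexp : ‖x' - z‖ ^ 2
      = ‖x - z‖ ^ 2 - 2 * (s * inner ℝ g (x - z)) + s ^ 2 * ‖g‖ ^ 2 := by
    have : x' - z = (x - z) - s • g := by rw [hx']; abel
    rw [this, norm_sub_sq_real, inner_smul_right, real_inner_comm, norm_smul, mul_pow,
      Real.norm_eq_abs, sq_abs]
  set δ := ‖x - z‖ ^ 2 - ‖x' - z‖ ^ 2 with hδ
  have hdec : s * L ≤ δ := by
    have h1 := mul_le_mul_of_nonneg_left hin hs0
    have h2 := mul_le_mul_of_nonneg_left hsG hs0
    nlinarith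
  have hδ0 : 0 ≤ δ := (mul_nonneg hs0 hL).trans hdec
  refine ⟨hδ0, ?_⟩
  rcases min_choice 1 (L / (η * ‖g‖ ^ 2)) with h | h
  · rw [h, one_mul] at hs
    have : L ≤ δ / η := by
      rw [le_div_iff₀ hη, mul_comm, ← hs]; exact hdec
    have : 0 ≤ C * √δ := by positivity
    linarith
  · have hsL : s * ‖g‖ ^ 2 = L := by rw [hs, h]; field_simp
    have hsq : L ^ 2 ≤ (C * √δ) ^ 2 := by
      rw [mul_pow, Real.sq_sqrt hδ0]
      calc L ^ 2 = ‖g‖ ^ 2 * (s * L) := by rw [sq]; nth_rewrite 1 [← hsL]; ring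
        _ ≤ C ^ 2 * δ := by gcongr
    have : L ≤ C * √δ := (sq_le_sq₀ hL (by positivity)).mp hsq
    have : 0 ≤ δ / η := by positivity
    linarith


/-- **ALI-G convergence rate, convex and Lipschitz case.** Under perfect interpolation, the
averaged loss of the ALI-G iterates satisfies
`(1/(T+1)) Σ_{t=0}^T ℓ_t(w_t) ≤ C √(‖w₀ − w*‖²/(T+1)) + ‖w₀ − w*‖²/(η(T+1))`. -/
theorem alig_convex_lipschitz_rate {E : Type*} [NormedAddCommGroup E] [InnerProductSpace ℝ E]
    (η C : ℝ) (hη : 0 < η) (hC : 0 < C) (T : ℕ)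
    (ℓ : ℕ → E → ℝ) (gℓ : ℕ → E → E)
    (hgrad : ∀ t, ∀ x : E, HasFDerivAt (ℓ t) (innerSL ℝ (gℓ t x)) x)
    (hconv : ∀ t, ConvexOn ℝ Set.univ (ℓ t))
    (hlip : ∀ t, ∀ x y : E, |ℓ t x - ℓ t y| ≤ C * ‖x - y‖)
    (hnonneg : ∀ t, ∀ x : E, 0 ≤ ℓ t x)
    (wstar : E) (hinterp : ∀ t, ℓ t wstar = 0)
    (w : ℕ → E)
    (hstep : ∀ t, w (t + 1)
      = w t - (min 1 (ℓ t (w t) / (η * ‖gℓ t (w t)‖ ^ 2)) * η) • gℓ t (w t)) :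
    (1 / ((T : ℝ) + 1)) * ∑ t ∈ Finset.range (T + 1), ℓ t (w t)
      ≤ C * Real.sqrt (‖w 0 - wstar‖ ^ 2 / ((T : ℝ) + 1))
        + ‖w 0 - wstar‖ ^ 2 / (η * ((T : ℝ) + 1)) := by
  set δ : ℕ → ℝ := fun t => ‖w t - wstar‖ ^ 2 - ‖w (t + 1) - wstar‖ ^ 2 with hδ
  have key : ∀ t, 0 ≤ δ t ∧ ℓ t (w t) ≤ δ t / η + C * √(δ t) := by
    intro t
    refine alig_step hη (hnonneg t (w t)) ?_ ?_ (hstep t)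
    · rw [← innerSL_apply_norm ℝ (gℓ t (w t))]
      exact (hgrad t (w t)).le_of_lip' hC.le (.of_forall fun x => hlip t x (w t))
    · have h := convex_tangent_le (hgrad t (w t)) (hconv t) wstar
      rw [hinterp t, ← neg_sub (w t), inner_neg_right] at h
      linarith
  set D := ‖w 0 - wstar‖ ^ 2 with hD
  set N : ℝ := (T : ℝ) + 1 with hN
  have hN0 : 0 < N := by positivity
  have htel : ∑ t ∈ Finset.range (T + 1), δ t ≤ D := by
    rw [hδ, Finset.sum_range_sub' (fun t => ‖w t - wstar‖ ^ 2)]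
    linarith [sq_nonneg ‖w (T + 1) - wstar‖]
  have hsqrt : ∑ t ∈ Finset.range (T + 1), √(δ t) ≤ √(N * D) := by
    apply Real.le_sqrt_of_sq_le
    refine sq_sum_le_card_mul_sum_sq.trans ?_
    simp only [Real.sq_sqrt (key _).1, Finset.card_range, Nat.cast_add, Nat.cast_one]
    gcongr
  have hsum : ∑ t ∈ Finset.range (T + 1), ℓ t (w t) ≤ D / η + C * √(N * D) := by
    refine (Finset.sum_le_sum fun t _ => (key t).2).trans ?_
    rw [Finset.sum_add_distrib, ← Finset.sum_div, ← Finset.mul_sum]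
    gcongr
  have hND : √(N * D) = N * √(D / N) := by
    rw [show N * D = N ^ 2 * (D / N) by field_simp, Real.sqrt_mul (by positivity),
      Real.sqrt_sq hN0.le]
  calc 1 / N * ∑ t ∈ Finset.range (T + 1), ℓ t (w t)
      ≤ 1 / N * (D / η + C * (N * √(D / N))) := by rw [← hND]; gcongr
    _ = C * √(D / N) + D / (η * N) := by field_simp; ring
end

section
/- Let E be a real inner product space, β > 0, and 0 < η ≤ 1/(2β). For t = 0,...,T let ℓ_t : E → ℝ be convex, differentiable, nonnegative and β-smooth, and suppose there exists w* ∈ E with ℓ_t(w*) = 0 for all t (perfect interpolation). Generate iterates by the ALI-G update: w_{t+1} = w_t − γ_t η ∇ℓ_t(w_t) with γ_t = min{1, ℓ_t(w_t)/(η‖∇ℓ_t(w_t)‖²)}. Then (1/(T+1)) Σ_{t=0}^T ℓ_t(w_t) ≤ ‖w_0 − w*‖²/(η(T+1)). -/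
/-!
For a nonnegative `β`-smooth function, the descent lemma along the gradient step of length `1/β`
gives `‖∇ℓ‖² ≤ 2βℓ`. When `η ≤ 1/(2β)`, this yields `η‖∇ℓ‖² ≤ ℓ`, so the clipping is inactive
(`γ = 1`) wherever the gradient is nonzero: ALI-G is then plain gradient descent. Expanding the
square and using the first-order convexity inequality `ℓ(w) ≤ ⟪∇ℓ(w), w - w*⟫`, each step satisfies
`‖w⁺ - w*‖² ≤ ‖w - w*‖² - η ℓ(w)`, and telescoping gives the rate. Where the gradient vanishes, the
iterate does not move, and convexity forces `ℓ(w) = 0`, so the same inequality holds.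
-/

/-- The chain rule for the restriction of a differentiable function to a line. -/
lemma alig_hasDerivAt_line {E : Type*} [NormedAddCommGroup E] [InnerProductSpace ℝ E]
    {f : E → ℝ} {g : E → E} (hgrad : ∀ x : E, HasFDerivAt f (innerSL ℝ (g x)) x)
    (x v : E) (s : ℝ) :
    HasDerivAt (fun s : ℝ => f (x + s • v)) (inner ℝ (g (x + s • v)) v) s := by
  have h : HasDerivAt (fun s : ℝ => x + s • v) v s := by
    simpa using ((hasDerivAt_id s).smul_const v).const_add x
  exact (hgrad (x + s • v)).comp_hasDerivAt s h

/-- First-order convexity inequality at a zero `y` of `f`. -/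
lemma alig_le_inner {E : Type*} [NormedAddCommGroup E] [InnerProductSpace ℝ E]
    {f : E → ℝ} {g : E → E} (hgrad : ∀ x : E, HasFDerivAt f (innerSL ℝ (g x)) x)
    (hconv : ConvexOn ℝ Set.univ f) (x y : E) (hy : f y = 0) :
    f x ≤ inner ℝ (g x) (x - y) := by
  have hline : ConvexOn ℝ Set.univ (fun s : ℝ => f (x + s • (y - x))) := by
    refine ⟨convex_univ, fun a _ b _ p q hp hq hpq => ?_⟩
    have := hconv.2 (Set.mem_univ (x + a • (y - x))) (Set.mem_univ (x + b • (y - x))) hp hq hpq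
    convert this using 2
    obtain rfl : q = 1 - p := by linarith
    simp only [smul_eq_mul]
    module
  have hd := alig_hasDerivAt_line hgrad x (y - x) 0
  have h := hline.le_slope_of_hasDerivAt (Set.mem_univ 0) (Set.mem_univ 1) zero_lt_one hd
  simp [slope_def_field, hy] at h
  rw [← neg_sub y x, inner_neg_right]
  linarith

/-- A nonnegative `β`-smooth function satisfies `‖∇f‖² ≤ 2βf`: the value at the end of a gradient
step of length `1/β` is nonnegative and at most `f x - ‖∇f x‖² / (2β)`. -/
lemma alig_norm_grad_sq_le {E : Type*} [NormedAddCommGroup E] [InnerProductSpace ℝ E]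
    {f : E → ℝ} {g : E → E} {β : ℝ} (hβ : 0 < β)
    (hgrad : ∀ x : E, HasFDerivAt f (innerSL ℝ (g x)) x)
    (hsmooth : ∀ x y : E, ‖g x - g y‖ ≤ β * ‖x - y‖)
    (hnonneg : ∀ x : E, 0 ≤ f x) (x : E) :
    ‖g x‖ ^ 2 ≤ 2 * β * f x := by
  -- Smoothness makes this function of the step length antitone on `[0, ∞)` (descent lemma).
  set φ : ℝ → ℝ := fun s =>
    f (x + s • (-g x)) + (s * ‖g x‖ ^ 2 - s ^ 2 * (β * ‖g x‖ ^ 2 / 2)) with hφ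
  have hd : ∀ s, HasDerivAt φ (inner ℝ (g (x + s • (-g x))) (-g x)
      + (1 * ‖g x‖ ^ 2 - (2 * s) * (β * ‖g x‖ ^ 2 / 2))) s := by
    intro s
    refine (alig_hasDerivAt_line hgrad x (-g x) s).add
      (((hasDerivAt_id s).mul_const _).sub (HasDerivAt.mul_const ?_ _))
    simpa using hasDerivAt_pow 2 s
  have hanti : AntitoneOn φ (Set.Ici 0) := by
    refine antitoneOn_of_deriv_nonpos (convex_Ici 0)
      (fun s _ => (hd s).continuousAt.continuousWithinAt)
      (fun s _ => (hd s).differentiableAt.differentiableWithinAt) ?_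
    intro s hs
    rw [interior_Ici] at hs
    have hs : 0 < s := hs
    rw [(hd s).deriv]
    have h1 := hsmooth x (x + s • (-g x))
    have h2 : ‖x - (x + s • (-g x))‖ = s * ‖g x‖ := by
      rw [sub_add_cancel_left, norm_neg, norm_smul, norm_neg, Real.norm_of_nonneg hs.le]
    rw [h2] at h1
    have h3 := real_inner_le_norm (g x - g (x + s • (-g x))) (g x)
    have h4 := mul_le_mul_of_nonneg_right h1 (norm_nonneg (g x))
    rw [inner_sub_left, real_inner_self_eq_norm_sq] at h3
    rw [inner_neg_right]
    nlinarith
  have h := hanti (Set.mem_Ici.2 le_rfl) (Set.mem_Ici.2 (inv_pos.2 hβ).le) (inv_pos.2 hβ).le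
  have hn := hnonneg (x + β⁻¹ • (-g x))
  simp only [hφ, zero_smul, add_zero, zero_mul, ne_eq, OfNat.ofNat_ne_zero, not_false_eq_true,
    zero_pow, sub_zero] at h
  have he : β⁻¹ * ‖g x‖ ^ 2 - β⁻¹ ^ 2 * (β * ‖g x‖ ^ 2 / 2) = ‖g x‖ ^ 2 / (2 * β) := by
    field_simp
    ring
  rw [he] at h
  have h5 : ‖g x‖ ^ 2 / (2 * β) ≤ f x := by linarith
  rw [div_le_iff₀ (by positivity)] at h5
  linarith

/-- **ALI-G convergence rate, convex and smooth case with small `η`.** Under perfect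
interpolation and `0 < η ≤ 1/(2β)`, the averaged loss of the ALI-G iterates satisfies
`(1/(T+1)) Σ_{t=0}^T ℓ_t(w_t) ≤ ‖w₀ − w*‖²/(η(T+1))`. -/
theorem alig_convex_smooth_small_eta_rate {E : Type*} [NormedAddCommGroup E]
    [InnerProductSpace ℝ E]
    (η β : ℝ) (hβ : 0 < β) (hη : 0 < η) (hηβ : η ≤ 1 / (2 * β)) (T : ℕ)
    (ℓ : ℕ → E → ℝ) (gℓ : ℕ → E → E)
    (hgrad : ∀ t, ∀ x : E, HasFDerivAt (ℓ t) (innerSL ℝ (gℓ t x)) x)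
    (hconv : ∀ t, ConvexOn ℝ Set.univ (ℓ t))
    (hsmooth : ∀ t, ∀ x y : E, ‖gℓ t x - gℓ t y‖ ≤ β * ‖x - y‖)
    (hnonneg : ∀ t, ∀ x : E, 0 ≤ ℓ t x)
    (wstar : E) (hinterp : ∀ t, ℓ t wstar = 0)
    (w : ℕ → E)
    (hstep : ∀ t, w (t + 1)
      = w t - (min 1 (ℓ t (w t) / (η * ‖gℓ t (w t)‖ ^ 2)) * η) • gℓ t (w t)) :
    (1 / ((T : ℝ) + 1)) * ∑ t ∈ Finset.range (T + 1), ℓ t (w t)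
      ≤ ‖w 0 - wstar‖ ^ 2 / (η * ((T : ℝ) + 1)) := by
  have key : ∀ t, ‖w (t + 1) - wstar‖ ^ 2 ≤ ‖w t - wstar‖ ^ 2 - η * ℓ t (w t) := by
    intro t
    have hc := alig_le_inner (hgrad t) (hconv t) (w t) wstar (hinterp t)
    have hb := alig_norm_grad_sq_le hβ (hgrad t) (hsmooth t) (hnonneg t) (w t)
    have hl := hnonneg t (w t)
    have hηβ' : η * (2 * β) ≤ 1 := (le_div_iff₀ (by positivity)).1 hηβ
    have hclip : η * ‖gℓ t (w t)‖ ^ 2 ≤ ℓ t (w t) := by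
      have h1 := mul_le_mul_of_nonneg_left hb hη.le
      have h2 := mul_le_mul_of_nonneg_right hηβ' hl
      linarith
    rw [hstep t]
    by_cases hg : gℓ t (w t) = 0
    · rw [hg, inner_zero_left] at hc
      have h0 : ℓ t (w t) = 0 := le_antisymm hc hl
      simp [hg, h0]
    · have hpos : 0 < η * ‖gℓ t (w t)‖ ^ 2 := by
        have := norm_pos_iff.2 hg
        positivity
      rw [min_eq_left ((one_le_div hpos).2 hclip), one_mul, sub_right_comm, norm_sub_sq_real,
        inner_smul_right, real_inner_comm, norm_smul, Real.norm_of_nonneg hη.le, mul_pow]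
      nlinarith [mul_le_mul_of_nonneg_left hc hη.le, mul_le_mul_of_nonneg_left hclip hη.le]
  have tele : ∀ n, η * ∑ t ∈ Finset.range n, ℓ t (w t)
      ≤ ‖w 0 - wstar‖ ^ 2 - ‖w n - wstar‖ ^ 2 := by
    intro n
    induction n with
    | zero => simp
    | succ n ih =>
      rw [Finset.sum_range_succ, mul_add]
      linarith [key n]
  have h := tele (T + 1)
  have hT : (0 : ℝ) < (T : ℝ) + 1 := by positivity
  rw [le_div_iff₀ (by positivity)]
  calc _ = η * ∑ t ∈ Finset.range (T + 1), ℓ t (w t) := by field_simp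
    _ ≤ _ := by linarith [sq_nonneg ‖w (T + 1) - wstar‖]
end

section
/- Let E be a real inner product space, 0 < α ≤ β, and η ≥ 1/(2β). For each t ≥ 0 let ℓ_t : E → ℝ be differentiable, α-strongly convex, nonnegative and β-smooth, and suppose there exists w* ∈ E with ℓ_t(w*) = 0 for all t (perfect interpolation). Generate iterates by the ALI-G update: w_{t+1} = w_t − γ_t η ∇ℓ_t(w_t) with γ_t = min{1, ℓ_t(w_t)/(η‖∇ℓ_t(w_t)‖²)}. Then for every T ≥ 0, ‖w_T − w*‖² ≤ (1 − α/(4β))^T ‖w_0 − w*‖², and consequently ℓ_T(w_T) ≤ (β/2) exp(−αT/(4β)) ‖w_0 − w*‖². -/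
/-!
Nonnegativity and smoothness give `‖∇ℓ(w)‖² ≤ 2β ℓ(w)` (`norm_grad_sq_le`), so the effective step size
`s = min(η, ℓ(w)/‖∇ℓ(w)‖²)` is at least `1/(2β)`, while `s ‖∇ℓ(w)‖² ≤ ℓ(w)` by construction
(`alig_step_bounds`). Expanding the square and using strong convexity with `ℓ(w*) = 0` in the form
`ℓ(w) + (α/2)‖w − w*‖² ≤ ⟪∇ℓ(w), w − w*⟫`,
`‖w⁺ − w*‖² ≤ ‖w − w*‖² − 2s⟪∇ℓ(w), w − w*⟫ + s²‖∇ℓ(w)‖² ≤ (1 − sα)‖w − w*‖² − s ℓ(w)`,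
which is at most `(1 − α/(2β))‖w − w*‖²`; this is stronger than the claimed contraction. If
`∇ℓ(w) = 0`, strong convexity forces `w = w*`. The bound on `ℓ_T(w_T)` is the descent lemma at `w*`
together with `1 − x ≤ exp(−x)`.
-/

/-- First-order characterisation of strong convexity. -/
lemma strongConvex_first_order {E : Type*} [NormedAddCommGroup E] [InnerProductSpace ℝ E]
    {α : ℝ} {f : E → ℝ} {g : E → E} (hf : ∀ x, HasFDerivAt f (innerSL ℝ (g x)) x)
    (hsc : ConvexOn ℝ Set.univ (fun x : E => f x - α / 2 * ‖x‖ ^ 2)) (x y : E) :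
    f x + inner ℝ (g x) (y - x) + α / 2 * ‖y - x‖ ^ 2 ≤ f y := by
  have hline : HasDerivAt (fun t : ℝ => x + t • (y - x)) (y - x) 0 := by
    simpa using ((hasDerivAt_id (0 : ℝ)).smul_const (y - x)).const_add x
  have hx : x + (0 : ℝ) • (y - x) = x := by simp
  have h1 : HasDerivAt (fun t : ℝ => f (x + t • (y - x))) (inner ℝ (g x) (y - x)) 0 := by
    have := (hf (x + (0 : ℝ) • (y - x))).comp_hasDerivAt (0 : ℝ) hline
    simpa [Function.comp_def] using this
  have h2 : HasDerivAt (fun t : ℝ => ‖x + t • (y - x)‖ ^ 2) (2 * inner ℝ x (y - x)) 0 := by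
    simpa using hline.norm_sq
  have h3 := h1.sub (h2.const_mul (α / 2))
  have hconv : ConvexOn ℝ Set.univ
      (fun t : ℝ => f (x + t • (y - x)) - α / 2 * ‖x + t • (y - x)‖ ^ 2) := by
    have := hsc.comp_affineMap (AffineMap.lineMap x y : ℝ →ᵃ[ℝ] E)
    simpa [Function.comp_def, AffineMap.lineMap_apply, add_comm] using this
  have h4 := hconv.le_slope_of_hasDerivAt (Set.mem_univ 0) (Set.mem_univ 1) zero_lt_one h3
  simp only [slope_def_field, sub_zero, div_one, one_smul, zero_smul, add_zero,
    add_sub_cancel] at h4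
  have h5 : ‖y - x‖ ^ 2 = ‖y‖ ^ 2 - ‖x‖ ^ 2 - 2 * inner ℝ x (y - x) := by
    rw [inner_sub_right, real_inner_self_eq_norm_sq, norm_sub_sq_real, real_inner_comm]
    ring
  rw [h5]
  linarith

/-- Descent lemma: the quadratic upper bound for a function with `β`-Lipschitz gradient. -/
lemma smooth_descent {E : Type*} [NormedAddCommGroup E] [InnerProductSpace ℝ E]
    {β : ℝ} {f : E → ℝ} {g : E → E} (hf : ∀ x, HasFDerivAt f (innerSL ℝ (g x)) x)
    (hsmooth : ∀ x y : E, ‖g x - g y‖ ≤ β * ‖x - y‖) (x v : E) :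
    f (x + v) ≤ f x + inner ℝ (g x) v + β / 2 * ‖v‖ ^ 2 := by
  -- The gap between `f` and its quadratic model at `x` is antitone along the ray from `x`.
  have hd : ∀ t : ℝ, HasDerivAt
      (fun t : ℝ => f (x + t • v) - t * inner ℝ (g x) v - t ^ 2 * (β / 2 * ‖v‖ ^ 2))
      (inner ℝ (g (x + t • v)) v - inner ℝ (g x) v - 2 * t * (β / 2 * ‖v‖ ^ 2)) t := by
    intro t
    have hline : HasDerivAt (fun t : ℝ => x + t • v) v t := by
      simpa using ((hasDerivAt_id t).smul_const v).const_add x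
    have h1 : HasDerivAt (fun t : ℝ => f (x + t • v)) (inner ℝ (g (x + t • v)) v) t := by
      have := (hf (x + t • v)).comp_hasDerivAt t hline
      simpa [Function.comp_def] using this
    have h2 : HasDerivAt (fun t : ℝ => t * inner ℝ (g x) v) (inner ℝ (g x) v) t := by
      simpa using (hasDerivAt_id t).mul_const (inner ℝ (g x) v)
    have h3 : HasDerivAt (fun t : ℝ => t ^ 2 * (β / 2 * ‖v‖ ^ 2))
        (2 * t * (β / 2 * ‖v‖ ^ 2)) t := by
      simpa using (hasDerivAt_pow 2 t).mul_const (β / 2 * ‖v‖ ^ 2)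
    exact (h1.sub h2).sub h3
  have hanti := antitoneOn_of_deriv_nonpos (convex_Ici (0 : ℝ))
    (fun t _ => (hd t).continuousAt.continuousWithinAt)
    (fun t _ => (hd t).differentiableAt.differentiableWithinAt)
    (fun t ht => by
      rw [interior_Ici, Set.mem_Ioi] at ht
      rw [(hd t).deriv, ← inner_sub_left]
      have h1 := real_inner_le_norm (g (x + t • v) - g x) v
      have h2 := hsmooth (x + t • v) x
      rw [add_sub_cancel_left, norm_smul, Real.norm_of_nonneg ht.le] at h2
      have h3 := mul_le_mul_of_nonneg_right h2 (norm_nonneg v)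
      nlinarith)
  have h := hanti (Set.mem_Ici.2 le_rfl) (Set.mem_Ici.2 zero_le_one) zero_le_one
  simp only [one_smul, zero_smul, add_zero] at h
  linarith

/-- A nonnegative `β`-smooth function satisfies `‖∇f‖² ≤ 2βf`: one gradient step of length `1/β`
cannot push `f` below zero. -/
lemma norm_grad_sq_le {E : Type*} [NormedAddCommGroup E] [InnerProductSpace ℝ E]
    {β : ℝ} (hβ : 0 < β) {f : E → ℝ} {g : E → E}
    (hf : ∀ x, HasFDerivAt f (innerSL ℝ (g x)) x)
    (hsmooth : ∀ x y : E, ‖g x - g y‖ ≤ β * ‖x - y‖) (hnonneg : ∀ x, 0 ≤ f x) (x : E) :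
    ‖g x‖ ^ 2 ≤ 2 * β * f x := by
  have h := smooth_descent hf hsmooth x (-(1 / β) • g x)
  have h0 := hnonneg (x + -(1 / β) • g x)
  rw [inner_smul_right, real_inner_self_eq_norm_sq, norm_smul, mul_pow, Real.norm_eq_abs,
    sq_abs] at h
  have h2 : f x + -(1 / β) * ‖g x‖ ^ 2 + β / 2 * ((-(1 / β)) ^ 2 * ‖g x‖ ^ 2)
      = (2 * β * f x - ‖g x‖ ^ 2) / (2 * β) := by
    field_simp
    ring
  rw [h2] at h
  have h3 := (le_div_iff₀ (by positivity)).1 (h0.trans h)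
  linarith

/-- The effective ALI-G step size `s = min(1, l/(ηG))η`, with `l` the loss and `G > 0` the squared
gradient norm, satisfies `1/(2β) ≤ s` and `sG ≤ l`. -/
lemma alig_step_bounds {β η l G : ℝ} (hβ : 0 < β) (hη : 1 / (2 * β) ≤ η) (hG : 0 < G)
    (hGl : G ≤ 2 * β * l) :
    1 / (2 * β) ≤ min 1 (l / (η * G)) * η ∧ min 1 (l / (η * G)) * η * G ≤ l := by
  have hη0 : 0 < η := lt_of_lt_of_le (by positivity) hη
  have h1 : min 1 (l / (η * G)) * η = min η (l / G) := by
    rw [min_mul_of_nonneg _ _ hη0.le, one_mul]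
    congr 1
    field_simp
  rw [h1]
  refine ⟨le_min hη ?_, ?_⟩
  · rw [div_le_div_iff₀ (by positivity) hG]
    linarith
  · exact (le_div_iff₀ hG).1 (min_le_right _ _)


/-- **ALI-G linear convergence, strongly convex and smooth case with large `η`.** Under perfect
interpolation and `η ≥ 1/(2β)`, for every `T`,
`‖w_T − w*‖² ≤ (1 − α/(4β))^T ‖w₀ − w*‖²` and
`ℓ_T(w_T) ≤ (β/2) exp(−αT/(4β)) ‖w₀ − w*‖²`. -/
theorem alig_strongly_convex_large_eta_rate {E : Type*} [NormedAddCommGroup E]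
    [InnerProductSpace ℝ E]
    (α β η : ℝ) (hα : 0 < α) (hαβ : α ≤ β) (hη : 1 / (2 * β) ≤ η)
    (ℓ : ℕ → E → ℝ) (gℓ : ℕ → E → E)
    (hgrad : ∀ t, ∀ x : E, HasFDerivAt (ℓ t) (innerSL ℝ (gℓ t x)) x)
    (hsc : ∀ t, ConvexOn ℝ Set.univ (fun x : E => ℓ t x - α / 2 * ‖x‖ ^ 2))
    (hsmooth : ∀ t, ∀ x y : E, ‖gℓ t x - gℓ t y‖ ≤ β * ‖x - y‖)
    (hnonneg : ∀ t, ∀ x : E, 0 ≤ ℓ t x)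
    (wstar : E) (hinterp : ∀ t, ℓ t wstar = 0)
    (w : ℕ → E)
    (hstep : ∀ t, w (t + 1)
      = w t - (min 1 (ℓ t (w t) / (η * ‖gℓ t (w t)‖ ^ 2)) * η) • gℓ t (w t)) :
    ∀ T : ℕ,
      ‖w T - wstar‖ ^ 2 ≤ (1 - α / (4 * β)) ^ T * ‖w 0 - wstar‖ ^ 2
      ∧ ℓ T (w T) ≤ (β / 2) * Real.exp (-(α * T) / (4 * β)) * ‖w 0 - wstar‖ ^ 2 := by
  have hβ : 0 < β := hα.trans_le hαβ
  have hcontr : ∀ t, ‖w (t + 1) - wstar‖ ^ 2 ≤ (1 - α / (4 * β)) * ‖w t - wstar‖ ^ 2 := by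
    intro t
    have hfo := strongConvex_first_order (hgrad t) (hsc t) (w t) wstar
    rw [hinterp t, ← neg_sub (w t) wstar, inner_neg_right, norm_neg] at hfo
    have hl := hnonneg t (w t)
    by_cases hg : gℓ t (w t) = 0
    · -- A vanishing gradient forces `w t = wstar`, and the step is zero.
      rw [hstep t, hg, smul_zero, sub_zero]
      rw [hg, inner_zero_left] at hfo
      have hD : ‖w t - wstar‖ ^ 2 = 0 := by
        have := sq_nonneg ‖w t - wstar‖
        nlinarith
      rw [hD, mul_zero]
    · have hG : 0 < ‖gℓ t (w t)‖ ^ 2 := by positivity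
      obtain ⟨hs1, hs2⟩ := alig_step_bounds hβ hη hG
        (norm_grad_sq_le hβ (hgrad t) (hsmooth t) (hnonneg t) (w t))
      rw [hstep t]
      generalize min 1 (ℓ t (w t) / (η * ‖gℓ t (w t)‖ ^ 2)) * η = s at hs1 hs2 ⊢
      have hs0 : 0 < s := lt_of_lt_of_le (by positivity) hs1
      have hexp : ‖w t - s • gℓ t (w t) - wstar‖ ^ 2 = ‖w t - wstar‖ ^ 2
          - 2 * s * inner ℝ (gℓ t (w t)) (w t - wstar) + s * (s * ‖gℓ t (w t)‖ ^ 2) := by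
        rw [sub_right_comm, norm_sub_sq_real, inner_smul_right, norm_smul, mul_pow,
          Real.norm_eq_abs, sq_abs, real_inner_comm]
        ring
      rw [hexp]
      have e1 := mul_le_mul_of_nonneg_left hs2 hs0.le
      have e2 := mul_le_mul_of_nonneg_left hfo hs0.le
      have e3 := mul_nonneg hs0.le hl
      have e4 : α / (4 * β) ≤ s * α := by
        have : α / (4 * β) = 1 / (2 * β) * α / 2 := by
          field_simp
          ring
        rw [this]
        nlinarith
      have e5 := mul_le_mul_of_nonneg_right e4 (sq_nonneg ‖w t - wstar‖)
      nlinarith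
  have hρ : 0 ≤ 1 - α / (4 * β) := by
    rw [sub_nonneg, div_le_one (by positivity)]
    linarith
  have hrate : ∀ T : ℕ, ‖w T - wstar‖ ^ 2 ≤ (1 - α / (4 * β)) ^ T * ‖w 0 - wstar‖ ^ 2 := by
    intro T
    induction T with
    | zero => simp
    | succ T ih =>
      calc ‖w (T + 1) - wstar‖ ^ 2 ≤ (1 - α / (4 * β)) * ‖w T - wstar‖ ^ 2 := hcontr T
        _ ≤ (1 - α / (4 * β)) * ((1 - α / (4 * β)) ^ T * ‖w 0 - wstar‖ ^ 2) := by gcongr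
        _ = _ := by ring
  intro T
  refine ⟨hrate T, ?_⟩
  have hgstar : gℓ T wstar = 0 := by
    have := norm_grad_sq_le hβ (hgrad T) (hsmooth T) (hnonneg T) wstar
    rw [hinterp T, mul_zero] at this
    simpa using le_antisymm this (sq_nonneg _)
  have hdesc := smooth_descent (hgrad T) (hsmooth T) wstar (w T - wstar)
  rw [hgstar, inner_zero_left, hinterp T, add_sub_cancel, zero_add, zero_add] at hdesc
  have hexp : (1 - α / (4 * β)) ^ T ≤ Real.exp (-(α * T) / (4 * β)) := by
    calc (1 - α / (4 * β)) ^ T ≤ Real.exp (-(α / (4 * β))) ^ T := by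
          gcongr
          exact Real.one_sub_le_exp_neg _
      _ = Real.exp (-(α * T) / (4 * β)) := by
          rw [← Real.exp_nat_mul]
          congr 1
          ring
  calc ℓ T (w T) ≤ β / 2 * ‖w T - wstar‖ ^ 2 := hdesc
    _ ≤ β / 2 * (Real.exp (-(α * T) / (4 * β)) * ‖w 0 - wstar‖ ^ 2) := by
        gcongr
        exact (hrate T).trans (by gcongr)
    _ = _ := by ring
end

section
/- Let E be a real inner product space, 0 < α ≤ β, and 0 < η ≤ 1/(2β). For each t ≥ 0 let ℓ_t : E → ℝ be differentiable, α-strongly convex, nonnegative and β-smooth, and suppose there exists w* ∈ E with ℓ_t(w*) = 0 for all t (perfect interpolation). Generate iterates by the ALI-G update: w_{t+1} = w_t − γ_t η ∇ℓ_t(w_t) with γ_t = min{1, ℓ_t(w_t)/(η‖∇ℓ_t(w_t)‖²)}. Then for every T ≥ 0, ‖w_T − w*‖² ≤ (1 − αη/2)^T ‖w_0 − w*‖², and consequently ℓ_T(w_T) ≤ (β/2) exp(−αηT/2) ‖w_0 − w*‖². -/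
/-!
The interpolation point `w*` minimises every `ℓ_t`, so smoothness (`le_quadratic`) yields
`‖∇ℓ_t(w)‖² ≤ 2β ℓ_t(w)` (`sq_norm_grad_le`). Since `2βη ≤ 1`, the quotient in the ALI-G step is
then at least `1` whenever the gradient does not vanish: the step is never clipped, and the method
is gradient descent with step `η`. Expanding the square and using the first-order form of strong
convexity, `⟪∇ℓ_t(w), w - w*⟫ ≥ ℓ_t(w) + (α/2)‖w - w*‖²` (`le_inner_grad`), each step contracts
`‖w - w*‖²` by `1 - αη ≤ 1 - αη/2`. Where the gradient vanishes, strong convexity forces `w = w*`.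
The bound on the loss follows from `ℓ_T(w) ≤ (β/2)‖w - w*‖²` and `1 - x ≤ exp (-x)`.
-/

namespace ALIG

variable {E : Type*} [NormedAddCommGroup E] [InnerProductSpace ℝ E]

lemma hasDerivAt_line {f : E → ℝ} {g : E → E}
    (hf : ∀ x, HasFDerivAt f (innerSL ℝ (g x)) x) (x v : E) (s : ℝ) :
    HasDerivAt (fun s : ℝ => f (x + s • v)) (inner ℝ (g (x + s • v)) v) s := by
  have h1 : HasDerivAt (fun s : ℝ => x + s • v) v s := by
    simpa using ((hasDerivAt_id s).smul_const v).const_add x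
  exact (hf (x + s • v)).comp_hasDerivAt s h1

/-- The descent lemma: a function with `β`-Lipschitz gradient lies below its quadratic model. -/
lemma le_quadratic {f : E → ℝ} {g : E → E} {β : ℝ}
    (hf : ∀ x, HasFDerivAt f (innerSL ℝ (g x)) x)
    (hg : ∀ x y, ‖g x - g y‖ ≤ β * ‖x - y‖) (x v : E) :
    f (x + v) ≤ f x + inner ℝ (g x) v + β / 2 * ‖v‖ ^ 2 := by
  -- Along the segment, `f` minus its quadratic model has nonpositive derivative.
  have hd : ∀ s : ℝ, HasDerivAt
      (fun s : ℝ => f (x + s • v) - (s * inner ℝ (g x) v + s ^ 2 * (β / 2 * ‖v‖ ^ 2)))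
      (inner ℝ (g (x + s • v)) v - (inner ℝ (g x) v + 2 * s * (β / 2 * ‖v‖ ^ 2))) s := by
    intro s
    refine (hasDerivAt_line hf x v s).sub (HasDerivAt.add ?_ ?_)
    · simpa using (hasDerivAt_id s).mul_const (inner ℝ (g x) v)
    · simpa using (hasDerivAt_pow 2 s).mul_const (β / 2 * ‖v‖ ^ 2)
  have hanti := antitoneOn_of_deriv_nonpos (convex_Icc (0 : ℝ) 1)
    (fun s _ => (hd s).continuousAt.continuousWithinAt)
    (fun s _ => (hd s).differentiableAt.differentiableWithinAt)
    (fun s hs => by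
      rw [interior_Icc] at hs
      rw [(hd s).deriv]
      have h1 : inner ℝ (g (x + s • v) - g x) v ≤ ‖g (x + s • v) - g x‖ * ‖v‖ :=
        real_inner_le_norm _ _
      have h2 := hg (x + s • v) x
      rw [add_sub_cancel_left, norm_smul, Real.norm_of_nonneg hs.1.le] at h2
      have h3 := mul_le_mul_of_nonneg_right h2 (norm_nonneg v)
      rw [inner_sub_left] at h1
      linarith)
  have h := hanti (Set.left_mem_Icc.2 zero_le_one) (Set.right_mem_Icc.2 zero_le_one) zero_le_one
  simp only [one_smul, zero_smul, add_zero] at h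
  linarith

/-- For a nonnegative smooth function, one gradient step of length `1/β` cannot go below `0`. -/
lemma sq_norm_grad_le {f : E → ℝ} {g : E → E} {β : ℝ} (hβ : 0 < β)
    (hf : ∀ x, HasFDerivAt f (innerSL ℝ (g x)) x)
    (hg : ∀ x y, ‖g x - g y‖ ≤ β * ‖x - y‖) (h0 : ∀ x, 0 ≤ f x) (x : E) :
    ‖g x‖ ^ 2 ≤ 2 * β * f x := by
  have h := (h0 _).trans (le_quadratic hf hg x (-(β⁻¹ • g x)))
  rw [norm_neg, inner_neg_right, inner_smul_right, norm_smul, real_inner_self_eq_norm_sq,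
    Real.norm_of_nonneg (inv_nonneg.2 hβ.le)] at h
  have h2 : f x + -(β⁻¹ * ‖g x‖ ^ 2) + β / 2 * (β⁻¹ * ‖g x‖) ^ 2
      = (2 * β * f x - ‖g x‖ ^ 2) / (2 * β) := by
    field_simp
    ring
  rw [h2, le_div_iff₀ (by positivity)] at h
  linarith

/-- First-order characterisation of `α`-strong convexity. -/
lemma le_inner_grad {f : E → ℝ} {g : E → E} {α : ℝ}
    (hf : ∀ x, HasFDerivAt f (innerSL ℝ (g x)) x)
    (hc : ConvexOn ℝ Set.univ (fun x : E => f x - α / 2 * ‖x‖ ^ 2)) (x y : E) :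
    f x - f y + α / 2 * ‖x - y‖ ^ 2 ≤ inner ℝ (g x) (x - y) := by
  have hd : HasDerivAt (fun s : ℝ => f (x + s • (y - x)) - α / 2 * ‖x + s • (y - x)‖ ^ 2)
      (inner ℝ (g x) (y - x) - α / 2 * (2 * inner ℝ x (y - x))) 0 := by
    have h1 := hasDerivAt_line hf x (y - x) 0
    have h2 : HasDerivAt (fun s : ℝ => x + s • (y - x)) (y - x) 0 := by
      simpa using ((hasDerivAt_id (0 : ℝ)).smul_const (y - x)).const_add x
    have h3 := h2.norm_sq
    simp only [zero_smul, add_zero] at h1 h3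
    exact h1.sub (h3.const_mul _)
  have hl : ConvexOn ℝ Set.univ
      (fun s : ℝ => f (x + s • (y - x)) - α / 2 * ‖x + s • (y - x)‖ ^ 2) := by
    have h := hc.comp_affineMap (AffineMap.lineMap x y : ℝ →ᵃ[ℝ] E)
    refine h.congr fun s _ => ?_
    simp [AffineMap.lineMap_apply, add_comm]
  have h := hl.le_slope_of_hasDerivAt (Set.mem_univ 0) (Set.mem_univ 1) zero_lt_one hd
  simp only [slope_def_field, one_smul, zero_smul, add_zero, add_sub_cancel, sub_zero,
    div_one] at h
  have e := norm_sub_sq_real x y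
  simp only [inner_sub_right, real_inner_self_eq_norm_sq] at h ⊢
  linear_combination h + α / 2 * e

/-- One ALI-G step contracts the squared distance to a zero of the loss. -/
lemma step_contraction {f : E → ℝ} {g : E → E} {α β η : ℝ} (hα : 0 < α) (hβ : 0 < β)
    (hη : 0 < η) (hηβ : 2 * β * η ≤ 1)
    (hf : ∀ x, HasFDerivAt f (innerSL ℝ (g x)) x)
    (hc : ConvexOn ℝ Set.univ (fun x : E => f x - α / 2 * ‖x‖ ^ 2))
    (hg : ∀ x y, ‖g x - g y‖ ≤ β * ‖x - y‖) (h0 : ∀ x, 0 ≤ f x)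
    {z : E} (hz : f z = 0) (x : E) :
    ‖x - (min 1 (f x / (η * ‖g x‖ ^ 2)) * η) • g x - z‖ ^ 2
      ≤ (1 - α * η / 2) * ‖x - z‖ ^ 2 := by
  have hsc := le_inner_grad hf hc x z
  have hgr := sq_norm_grad_le hβ hf hg h0 x
  have hfx := h0 x
  rw [hz] at hsc
  by_cases hgx : g x = 0
  · have hd : ‖x - z‖ ^ 2 = 0 := by
      rw [hgx, inner_zero_left] at hsc
      have h1 := sq_nonneg ‖x - z‖
      nlinarith
    simp [hgx, hd]
  · have hpos : 0 < ‖g x‖ := norm_pos_iff.2 hgx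
    have hmin : min 1 (f x / (η * ‖g x‖ ^ 2)) = 1 := by
      refine min_eq_left ((one_le_div (by positivity)).2 ?_)
      nlinarith [mul_le_mul_of_nonneg_left hgr hη.le, mul_le_mul_of_nonneg_right hηβ hfx]
    have e : x - η • g x - z = (x - z) - η • g x := by abel
    rw [hmin, one_mul, e, norm_sub_sq_real, inner_smul_right, norm_smul,
      Real.norm_of_nonneg hη.le, real_inner_comm, mul_pow]
    have h1 := mul_le_mul_of_nonneg_left hsc hη.le
    have h2 := mul_le_mul_of_nonneg_left hgr (sq_nonneg η)
    have h3 := mul_le_mul_of_nonneg_right hηβ (mul_nonneg hη.le hfx)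
    have h4 : 0 ≤ η * f x := by positivity
    have h5 : 0 ≤ α * η * ‖x - z‖ ^ 2 := by positivity
    linarith

lemma le_sq_dist {f : E → ℝ} {g : E → E} {β : ℝ}
    (hf : ∀ x, HasFDerivAt f (innerSL ℝ (g x)) x)
    (hg : ∀ x y, ‖g x - g y‖ ≤ β * ‖x - y‖) (h0 : ∀ x, 0 ≤ f x)
    {z : E} (hz : f z = 0) (x : E) : f x ≤ β / 2 * ‖x - z‖ ^ 2 := by
  -- `z` is a minimiser, so the linear term of the quadratic model vanishes.
  have hmin : IsLocalMin f z := Filter.Eventually.of_forall fun y => hz ▸ h0 y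
  have hgz : inner ℝ (g z) (x - z) = 0 := by
    simpa using DFunLike.congr_fun (hmin.hasFDerivAt_eq_zero (hf z)) (x - z)
  have h := le_quadratic hf hg z (x - z)
  rwa [hgz, hz, add_sub_cancel, zero_add, zero_add] at h

end ALIG


/-- **ALI-G linear convergence, strongly convex and smooth case with small `η`.** Under perfect
interpolation and `0 < η ≤ 1/(2β)`, for every `T`,
`‖w_T − w*‖² ≤ (1 − αη/2)^T ‖w₀ − w*‖²` and
`ℓ_T(w_T) ≤ (β/2) exp(−αηT/2) ‖w₀ − w*‖²`. -/
theorem alig_strongly_convex_small_eta_rate {E : Type*} [NormedAddCommGroup E]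
    [InnerProductSpace ℝ E]
    (α β η : ℝ) (hα : 0 < α) (hαβ : α ≤ β) (hη : 0 < η) (hηβ : η ≤ 1 / (2 * β))
    (ℓ : ℕ → E → ℝ) (gℓ : ℕ → E → E)
    (hgrad : ∀ t, ∀ x : E, HasFDerivAt (ℓ t) (innerSL ℝ (gℓ t x)) x)
    (hsc : ∀ t, ConvexOn ℝ Set.univ (fun x : E => ℓ t x - α / 2 * ‖x‖ ^ 2))
    (hsmooth : ∀ t, ∀ x y : E, ‖gℓ t x - gℓ t y‖ ≤ β * ‖x - y‖)
    (hnonneg : ∀ t, ∀ x : E, 0 ≤ ℓ t x)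
    (wstar : E) (hinterp : ∀ t, ℓ t wstar = 0)
    (w : ℕ → E)
    (hstep : ∀ t, w (t + 1)
      = w t - (min 1 (ℓ t (w t) / (η * ‖gℓ t (w t)‖ ^ 2)) * η) • gℓ t (w t)) :
    ∀ T : ℕ,
      ‖w T - wstar‖ ^ 2 ≤ (1 - α * η / 2) ^ T * ‖w 0 - wstar‖ ^ 2
      ∧ ℓ T (w T) ≤ (β / 2) * Real.exp (-(α * η * T) / 2) * ‖w 0 - wstar‖ ^ 2 := by
  have hβ : 0 < β := hα.trans_le hαβ
  have hηβ' : 2 * β * η ≤ 1 := by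
    rw [le_div_iff₀ (by positivity)] at hηβ
    linarith
  have hq : 0 ≤ 1 - α * η / 2 := by
    have := mul_le_mul_of_nonneg_right hαβ hη.le
    linarith
  have hdist : ∀ T : ℕ, ‖w T - wstar‖ ^ 2 ≤ (1 - α * η / 2) ^ T * ‖w 0 - wstar‖ ^ 2 := by
    intro T
    induction T with
    | zero => simp
    | succ n ih =>
      rw [hstep n, pow_succ' (1 - α * η / 2), mul_assoc (1 - α * η / 2)]
      exact (ALIG.step_contraction hα hβ hη hηβ' (hgrad n) (hsc n) (hsmooth n) (hnonneg n)
        (hinterp n) (w n)).trans (mul_le_mul_of_nonneg_left ih hq)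
  intro T
  refine ⟨hdist T, ?_⟩
  have hexp : (1 - α * η / 2) ^ T ≤ Real.exp (-(α * η * T) / 2) := by
    have e : -(α * η * T) / 2 = T * (-(α * η / 2)) := by ring
    rw [e, Real.exp_nat_mul]
    exact pow_le_pow_left₀ hq (Real.one_sub_le_exp_neg _) T
  calc ℓ T (w T) ≤ β / 2 * ‖w T - wstar‖ ^ 2 :=
        ALIG.le_sq_dist (hgrad T) (hsmooth T) (hnonneg T) (hinterp T) (w T)
    _ ≤ β / 2 * (Real.exp (-(α * η * T) / 2) * ‖w 0 - wstar‖ ^ 2) := by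
        gcongr
        exact (hdist T).trans (mul_le_mul_of_nonneg_right hexp (sq_nonneg _))
    _ = _ := by ring
end

section
/- Let E be a real inner product space, α > 0, and let ℓ : E → ℝ be differentiable, α-strongly convex, nonnegative, and such that inf ℓ = 0. Then for every w ∈ E, ℓ(w) ≤ ‖∇ℓ(w)‖²/(2α). -/
/-!
Applying the first-order (tangent) inequality to the convex function `ℓ - (α/2)‖·‖²` gives the
quadratic lower bound `ℓ y ≥ ℓ w + ⟪∇ℓ w, y - w⟫ + (α/2)‖y - w‖²`. Completing the square in
`y - w`, the right side is at least `ℓ w - ‖∇ℓ w‖² / (2α)` for every `y`; taking the infimum over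
`y`, which is zero, gives the claim.
-/

/-- The tangent inequality for a convex function on a whole space, obtained by restricting it to
the line through `x` and `y`. -/
lemma convexOn_univ_add_fderiv_le {E : Type*} [NormedAddCommGroup E] [NormedSpace ℝ E]
    {f : E → ℝ} (hf : ConvexOn ℝ Set.univ f) {f' : E →L[ℝ] ℝ} {x : E}
    (hx : HasFDerivAt f f' x) (y : E) : f x + f' (y - x) ≤ f y := by
  have hline : ConvexOn ℝ Set.univ (fun t : ℝ => f (AffineMap.lineMap x y t)) := by
    simpa [Function.comp_def] using hf.comp_affineMap (AffineMap.lineMap x y : ℝ →ᵃ[ℝ] E)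
  have hderiv : HasDerivAt (fun t : ℝ => f (AffineMap.lineMap x y t)) (f' (y - x)) 0 := by
    have hx0 : HasFDerivAt f f' (AffineMap.lineMap x y (0 : ℝ)) := by simpa using hx
    exact hx0.comp_hasDerivAt (0 : ℝ) AffineMap.hasDerivAt_lineMap
  have h := hline.le_slope_of_hasDerivAt (Set.mem_univ 0) (Set.mem_univ 1) one_pos hderiv
  simp only [slope_def_field, AffineMap.lineMap_apply_zero, AffineMap.lineMap_apply_one, sub_zero,
    div_one] at h
  linarith

/-- The quadratic lower bound characterising differentiable strongly convex functions. -/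
lemma add_inner_add_sq_le_of_strongly_convex {E : Type*} [NormedAddCommGroup E]
    [InnerProductSpace ℝ E] {α : ℝ} {ℓ : E → ℝ} {g w : E}
    (hgrad : HasFDerivAt ℓ (innerSL ℝ g) w)
    (hsc : ConvexOn ℝ Set.univ (fun x : E => ℓ x - α / 2 * ‖x‖ ^ 2)) (y : E) :
    ℓ w + inner ℝ g (y - w) + α / 2 * ‖y - w‖ ^ 2 ≤ ℓ y := by
  have hd := hgrad.sub (((hasStrictFDerivAt_norm_sq w).hasFDerivAt).const_mul (α / 2))
  have h := convexOn_univ_add_fderiv_le hsc hd y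
  simp only [ContinuousLinearMap.sub_apply, ContinuousLinearMap.smul_apply, innerSL_apply_apply,
    smul_eq_mul, nsmul_eq_mul, Nat.cast_ofNat] at h
  have hexp : ‖y‖ ^ 2 = ‖w‖ ^ 2 + 2 * inner ℝ w (y - w) + ‖y - w‖ ^ 2 := by
    rw [← norm_add_sq_real, add_sub_cancel]
  rw [hexp] at h
  linarith

/-- **Strong convexity upper bound on the loss (Polyak–Łojasiewicz type).** If `ℓ` is
`α`-strongly convex, nonnegative, and `inf ℓ = 0`, then `ℓ(w) ≤ ‖∇ℓ(w)‖²/(2α)` for every `w`. -/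
theorem strongly_convex_loss_grad_ratio_bound {E : Type*} [NormedAddCommGroup E]
    [InnerProductSpace ℝ E]
    (α : ℝ) (hα : 0 < α)
    (ℓ : E → ℝ) (gℓ : E → E)
    (hgrad : ∀ x : E, HasFDerivAt ℓ (innerSL ℝ (gℓ x)) x)
    (hsc : ConvexOn ℝ Set.univ (fun x : E => ℓ x - α / 2 * ‖x‖ ^ 2))
    (hnonneg : ∀ x : E, 0 ≤ ℓ x)
    (hinf : (⨅ w : E, ℓ w) = 0) :
    ∀ w : E, ℓ w ≤ ‖gℓ w‖ ^ 2 / (2 * α) := by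
  intro w
  have hlower : ∀ y, ℓ w - ‖gℓ w‖ ^ 2 / (2 * α) ≤ ℓ y := by
    intro y
    have h := add_inner_add_sq_le_of_strongly_convex (hgrad w) hsc y
    have hcs : -(‖gℓ w‖ * ‖y - w‖) ≤ inner ℝ (gℓ w) (y - w) :=
      neg_le_of_abs_le (abs_real_inner_le_norm _ _)
    have hsq : α / 2 * ‖y - w‖ ^ 2 - ‖gℓ w‖ * ‖y - w‖ + ‖gℓ w‖ ^ 2 / (2 * α)
        = (α * ‖y - w‖ - ‖gℓ w‖) ^ 2 / (2 * α) := by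
      field_simp
      ring
    have hpos : 0 ≤ (α * ‖y - w‖ - ‖gℓ w‖) ^ 2 / (2 * α) := by positivity
    linarith
  have h := le_ciInf hlower
  rw [hinf] at h
  linarith
end
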